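/- arXiv:2210.14545 — 3 statements merged into one kernel-verified Lean document; each statement's English description precedes it below -/
import Mathlib

section
/- Let Q ≥ 1, K ≥ 1, feature vectors z_1,…,z_Q ∈ ℝ^d, prototypes w_1,…,w_K ∈ ℝ^d, and assignment weights u_{n,k} ≥ 0 with Σ_{k=1}^K u_{n,k} = 1 for every n ∈ {1,…,Q}. Set û_k = (1/Q) Σ_{n=1}^Q u_{n,k} and assume û_k > 0 for every k. Define the posterior probabilities p_{n,k} = û_k exp(−(1/2)‖w_k − z_n‖²) / Σ_{j=1}^K û_j exp(−(1/2)‖w_j − z_n‖²). Then the following identity holds: (1/2) Σ_{k=1}^K Σ_{n=1}^Q u_{n,k} ‖w_k − z_n‖² = − Σ_{k=1}^K Σ_{n=1}^Q u_{n,k} ln p_{n,k} + Q Σ_{k=1}^K û_k ln û_k − Σ_{n=1}^Q ln( Σ_{j=1}^K û_j exp(−(1/2)‖w_j − z_n‖²) ). In particular, the probabilistic K-means data-fitting term decomposes into a posterior cross-entropy term plus the hidden class-balance term Q Σ_k û_k ln û_k, minus a log-partition term. -/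
/-- Decomposition of the probabilistic K-means data-fitting term: with class proportions
`û_k = (1/Q) Σ_n u_{n,k} > 0` and Bayes posteriors
`p_{n,k} = û_k e^{−(1/2)‖w_k − z_n‖²} / Σ_j û_j e^{−(1/2)‖w_j − z_n‖²}`, one has
`(1/2) Σ_k Σ_n u_{n,k} ‖w_k − z_n‖² = −Σ_k Σ_n u_{n,k} ln p_{n,k}
 + Q Σ_k û_k ln û_k − Σ_n ln(Σ_j û_j e^{−(1/2)‖w_j − z_n‖²})`. -/
theorem kmeans_hidden_class_balance (Q K d : ℕ) (hQ : 1 ≤ Q) (hK : 1 ≤ K)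
    (z : Fin Q → EuclideanSpace ℝ (Fin d)) (w : Fin K → EuclideanSpace ℝ (Fin d))
    (u : Fin Q → Fin K → ℝ) (hu : ∀ n k, 0 ≤ u n k) (hsum : ∀ n, ∑ k, u n k = 1)
    (uhat : Fin K → ℝ) (huhat : ∀ k, uhat k = (1 / Q : ℝ) * ∑ n, u n k)
    (hpos : ∀ k, 0 < uhat k)
    (p : Fin Q → Fin K → ℝ)
    (hp : ∀ n k, p n k = uhat k * Real.exp (-(1 / 2) * ‖w k - z n‖ ^ 2) /
        ∑ j, uhat j * Real.exp (-(1 / 2) * ‖w j - z n‖ ^ 2)) :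
    (1 / 2) * ∑ k, ∑ n, u n k * ‖w k - z n‖ ^ 2 =
      -(∑ k, ∑ n, u n k * Real.log (p n k))
        + (Q : ℝ) * ∑ k, uhat k * Real.log (uhat k)
        - ∑ n, Real.log (∑ j, uhat j * Real.exp (-(1 / 2) * ‖w j - z n‖ ^ 2)) := by
  have : Nonempty (Fin K) := ⟨⟨0, hK⟩⟩
  have hQ0 : (Q : ℝ) ≠ 0 := by positivity
  set Z : Fin Q → ℝ := fun n => ∑ j, uhat j * Real.exp (-(1 / 2) * ‖w j - z n‖ ^ 2)
  have hZpos : ∀ n, 0 < Z n := fun n =>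
    Finset.sum_pos (fun j _ => mul_pos (hpos j) (Real.exp_pos _)) Finset.univ_nonempty
  have hlog : ∀ n k, Real.log (p n k) =
      Real.log (uhat k) - (1 / 2) * ‖w k - z n‖ ^ 2 - Real.log (Z n) := by
    intro n k
    rw [hp, Real.log_div (mul_pos (hpos k) (Real.exp_pos _)).ne' (hZpos n).ne',
      Real.log_mul (hpos k).ne' (Real.exp_pos _).ne', Real.log_exp]
    ring
  have hbalance : (Q : ℝ) * ∑ k, uhat k * Real.log (uhat k) =
      ∑ k, ∑ n, u n k * Real.log (uhat k) := by
    rw [Finset.mul_sum]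
    refine Finset.sum_congr rfl fun k _ => ?_
    have hmass : (Q : ℝ) * uhat k = ∑ n, u n k := by
      rw [huhat k]
      field_simp
    rw [← mul_assoc, hmass, Finset.sum_mul]
  have hpartition : ∑ n, Real.log (Z n) = ∑ k, ∑ n, u n k * Real.log (Z n) := by
    rw [Finset.sum_comm]
    simp_rw [← Finset.sum_mul, hsum, one_mul]
  rw [hbalance, hpartition]
  simp_rw [Finset.mul_sum, ← Finset.sum_neg_distrib, ← Finset.sum_add_distrib,
    ← Finset.sum_sub_distrib, hlog]
  refine Finset.sum_congr rfl fun k _ => Finset.sum_congr rfl fun n _ => ?_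
  ring
end

section
/- Fix integers Q ≥ 1, N ≥ Q, K ≥ 1, reals λ > 0 and ε > 0, features z_1,…,z_N ∈ ℝ^d, and one-hot labels y_n ∈ {0,1}^K for n ∈ {Q+1,…,N} such that each class k has at least one n with y_{n,k} = 1. Let C = { U = (u_1,…,u_N) : u_n ∈ Δ_K for n ≤ Q, and u_n = y_n for n > Q }, let 𝕍_ε = [1 + ln ε, 1 + ln(1+ε)]^K, and define for (U, W, V) ∈ C × (ℝ^d)^K × 𝕍_ε the function F̃(U,W,V) = (1/2) Σ_{k=1}^K Σ_{n=1}^N u_{n,k} ‖w_k − z_n‖² + λ Σ_{k=1}^K e^{v_k − 1} − λ Σ_{k=1}^K v_k ( (1/Q) Σ_{n=1}^Q u_{n,k} + ε ) + Σ_{n=1}^N Σ_{k=1}^K u_{n,k} ln u_{n,k} (with 0·ln 0 = 0). Then for every r ∈ ℝ the sublevel set { (U,W,V) ∈ C × (ℝ^d)^K × 𝕍_ε : F̃(U,W,V) ≤ r } is compact. -/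
/-- If one weight equals `1` and all weights are nonnegative, a bound on the weighted sum of squared
distances to the points `z n` confines the point to a ball around the corresponding center. -/
theorem norm_sub_le_sqrt_of_weighted_sum_le {ι κ E : Type*} [Fintype ι] [Fintype κ]
    [SeminormedAddCommGroup E] {u : ι → κ → ℝ} (hu : ∀ n k, 0 ≤ u n k) {w : κ → E} {z : ι → E}
    {c : ℝ} (h : ∑ k, ∑ n, u n k * ‖w k - z n‖ ^ 2 ≤ c) {n : ι} {k : κ} (hnk : u n k = 1) :
    ‖w k - z n‖ ≤ √c := by
  have hterm : ∀ k n, 0 ≤ u n k * ‖w k - z n‖ ^ 2 := fun k n =>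
    mul_nonneg (hu n k) (sq_nonneg _)
  apply Real.le_sqrt_of_sq_le
  calc ‖w k - z n‖ ^ 2 = u n k * ‖w k - z n‖ ^ 2 := by rw [hnk, one_mul]
    _ ≤ ∑ n, u n k * ‖w k - z n‖ ^ 2 :=
      Finset.single_le_sum (fun n _ => hterm k n) (Finset.mem_univ n)
    _ ≤ ∑ k, ∑ n, u n k * ‖w k - z n‖ ^ 2 :=
      Finset.single_le_sum (f := fun k => ∑ n, u n k * ‖w k - z n‖ ^ 2)
        (fun k _ => Finset.sum_nonneg fun n _ => hterm k n) (Finset.mem_univ k)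
    _ ≤ c := h

/-- Compactness of the sublevel sets of the ε-regularized primal–dual PADDLE objective
`F̃(U,W,V)` over `C × (ℝ^d)^K × 𝕍_ε`, where `C` constrains query assignments to the
simplex and support assignments to the one-hot labels, `𝕍_ε = [1+ln ε, 1+ln(1+ε)]^K`,
and every class is represented in the support set. -/
theorem paddle_sublevel_compact (Q N K d : ℕ) (hQ : 1 ≤ Q) (hN : Q ≤ N) (hK : 1 ≤ K)
    (lam ε : ℝ) (hlam : 0 < lam) (hε : 0 < ε)
    (z : Fin N → EuclideanSpace ℝ (Fin d)) (y : Fin N → Fin K → ℝ)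
    (hy01 : ∀ n : Fin N, Q ≤ (n : ℕ) → ∀ k, y n k = 0 ∨ y n k = 1)
    (hysum : ∀ n : Fin N, Q ≤ (n : ℕ) → ∑ k, y n k = 1)
    (hcover : ∀ k, ∃ n : Fin N, Q ≤ (n : ℕ) ∧ y n k = 1)
    (r : ℝ) :
    IsCompact {p : (Fin N → Fin K → ℝ) × (Fin K → EuclideanSpace ℝ (Fin d)) × (Fin K → ℝ) |
      (∀ n : Fin N, ((n : ℕ) < Q → (∀ k, 0 ≤ p.1 n k) ∧ ∑ k, p.1 n k = 1) ∧
        (Q ≤ (n : ℕ) → p.1 n = y n)) ∧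
      (∀ k, p.2.2 k ∈ Set.Icc (1 + Real.log ε) (1 + Real.log (1 + ε))) ∧
      ((1 / 2) * ∑ k, ∑ n, p.1 n k * ‖p.2.1 k - z n‖ ^ 2
        + lam * ∑ k, Real.exp (p.2.2 k - 1)
        - lam * ∑ k, p.2.2 k *
            ((1 / Q : ℝ) * (∑ n ∈ Finset.univ.filter (fun n : Fin N => (n : ℕ) < Q), p.1 n k) + ε)
        + ∑ n, ∑ k, p.1 n k * Real.log (p.1 n k) ≤ r)} := by
  let g : (Fin N → Fin K → ℝ) × (Fin K → ℝ) → ℝ := fun q =>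
    lam * ∑ k, Real.exp (q.2 k - 1)
      - lam * ∑ k, q.2 k *
          ((1 / Q : ℝ) * (∑ n ∈ Finset.univ.filter (fun n : Fin N => (n : ℕ) < Q), q.1 n k) + ε)
      + ∑ n, ∑ k, q.1 n k * Real.log (q.1 n k)
  have hentropy : ∀ (n : Fin N) (k : Fin K), Continuous
      fun u : Fin N → Fin K → ℝ => u n k * Real.log (u n k) := fun n k =>
    Real.continuous_mul_log.comp (by fun_prop : Continuous fun u : Fin N → Fin K → ℝ => u n k)
  have hg : Continuous g := by
    refine Continuous.add (by fun_prop) ?_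
    exact continuous_finsetSum _ fun n _ => continuous_finsetSum _ fun k _ =>
      (hentropy n k).comp continuous_fst
  let A : Set (Fin N → Fin K → ℝ) := Set.univ.pi fun _ => Set.univ.pi fun _ => Set.Icc 0 1
  let B : Set (Fin K → ℝ) :=
    Set.univ.pi fun _ => Set.Icc (1 + Real.log ε) (1 + Real.log (1 + ε))
  have hA : IsCompact A := isCompact_univ_pi fun _ => isCompact_univ_pi fun _ => isCompact_Icc
  have hB : IsCompact B := isCompact_univ_pi fun _ => isCompact_Icc
  obtain ⟨m, hm⟩ := (hA.prod hB).bddBelow_image hg.continuousOn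
  choose s hsQ hs using hcover
  let D : Set (Fin K → EuclideanSpace ℝ (Fin d)) :=
    Set.univ.pi fun k => Metric.closedBall (z (s k)) (√(2 * (r - m)))
  have hD : IsCompact D := isCompact_univ_pi fun _ => isCompact_closedBall _ _
  refine (hA.prod (hD.prod hB)).of_isClosed_subset ?_ ?_
  · simp only [Set.ofPred_and, Set.ofPred_forall]
    refine IsClosed.inter (isClosed_iInter fun n => IsClosed.inter ?_ ?_)
      (IsClosed.inter (isClosed_iInter fun k => ?_) ?_)
    · refine isClosed_iInter fun _ => IsClosed.inter (isClosed_iInter fun k => ?_) ?_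
      · exact isClosed_le (by fun_prop) (by fun_prop)
      · exact isClosed_eq (by fun_prop) (by fun_prop)
    · exact isClosed_iInter fun _ => isClosed_eq (by fun_prop) (by fun_prop)
    · exact isClosed_Icc.preimage (by fun_prop)
    · refine isClosed_le (Continuous.add (by fun_prop) ?_) continuous_const
      exact continuous_finsetSum _ fun n _ => continuous_finsetSum _ fun k _ =>
        (hentropy n k).comp continuous_fst
  · rintro ⟨u, w, v⟩ ⟨hu, hv, hF⟩
    have hu01 : ∀ n k, u n k ∈ Set.Icc (0 : ℝ) 1 := by
      intro n k
      rcases lt_or_ge (n : ℕ) Q with hn | hn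
      · obtain ⟨h0, h1⟩ := (hu n).1 hn
        exact ⟨h0 k, h1 ▸ Finset.single_le_sum (fun j _ => h0 j) (Finset.mem_univ k)⟩
      · have hun : u n = y n := (hu n).2 hn
        rw [hun]
        rcases hy01 n hn k with h | h <;> simp [h]
    have huA : u ∈ A := fun n _ k _ => hu01 n k
    have hvB : v ∈ B := fun k _ => hv k
    refine ⟨huA, fun k _ => ?_, hvB⟩
    have hmg : m ≤ g (u, v) := hm ⟨(u, v), ⟨huA, hvB⟩, rfl⟩
    have hsum : ∑ k, ∑ n, u n k * ‖w k - z n‖ ^ 2 ≤ 2 * (r - m) := by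
      simp only [g] at hmg
      dsimp only at hF
      linarith
    rw [mem_closedBall_iff_norm]
    refine norm_sub_le_sqrt_of_weighted_sum_le (fun n k => (hu01 n k).1) hsum ?_
    have hus : u (s k) = y (s k) := (hu (s k)).2 (hsQ k)
    rw [hus, hs k]
end

section
/- Fix integers Q ≥ 1, N ≥ Q, K ≥ 1, reals λ > 0 and ε > 0, features z_1,…,z_N ∈ ℝ^d, one-hot labels y_n ∈ {0,1}^K for n ∈ {Q+1,…,N} with each class represented at least once, and initial points W^{(0)} ∈ (ℝ^d)^K, V^{(0)} = 0 ∈ ℝ^K. Define the iterates for ℓ = 1, 2, …: (i) u_n^{(ℓ)} = softmax( (−(1/2)‖w_k^{(ℓ−1)} − z_n‖² + (λ/Q) v_k^{(ℓ−1)})_{k=1,…,K} ) for n ≤ Q and u_n^{(ℓ)} = y_n for n > Q; (ii) v_k^{(ℓ)} = 1 + ln( (1/Q) Σ_{n=1}^{Q} u_{n,k}^{(ℓ)} + ε ) for each k; (iii) w_k^{(ℓ)} = ( Σ_{n=1}^N u_{n,k}^{(ℓ)} z_n ) / ( Σ_{n=1}^N u_{n,k}^{(ℓ)} ) for each k. Then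 these iterates are well defined (each denominator Σ_n u_{n,k}^{(ℓ)} is strictly positive), and the sequence (U^{(ℓ)}, W^{(ℓ)}, V^{(ℓ)})_{ℓ ≥ 1} is bounded: for every ℓ ≥ 1, each u_n^{(ℓ)} lies in the unit simplex Δ_K, each v_k^{(ℓ)} lies in the interval [1 + ln ε, 1 + ln(1+ε)], and each prototype w_k^{(ℓ)} lies in the convex hull of {z_1,…,z_N}. -/
/-- Softmax weights are nonnegative and sum to one. -/
lemma softmax_mem_simplex {ι : Type*} [Fintype ι] [Nonempty ι] (x : ι → ℝ) :
    (∀ k, 0 ≤ Real.exp (x k) / ∑ j, Real.exp (x j)) ∧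
      ∑ k, Real.exp (x k) / ∑ j, Real.exp (x j) = 1 := by
  have hpos : 0 < ∑ j, Real.exp (x j) :=
    Finset.sum_pos (fun j _ => Real.exp_pos _) Finset.univ_nonempty
  refine ⟨fun k => by positivity, ?_⟩
  rw [← Finset.sum_div, div_self hpos.ne']

lemma card_filter_fin_val_lt_le (N Q : ℕ) :
    (Finset.univ.filter (fun n : Fin N => (n : ℕ) < Q)).card ≤ Q := by
  simpa using Finset.card_le_card_of_injOn (t := Finset.range Q) (fun n : Fin N => (n : ℕ))
    (fun n hn => by simpa using hn) Fin.val_injective.injOn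

/-- Well-definedness and boundedness of the (ε-regularized) PADDLE block coordinate
descent iterates: for every `ℓ ≥ 1`, the denominators `Σ_n u_{n,k}^{(ℓ)}` are strictly
positive, each `u_n^{(ℓ)}` lies in the unit simplex `Δ_K`, each `v_k^{(ℓ)}` lies in
`[1 + ln ε, 1 + ln(1+ε)]`, and each prototype `w_k^{(ℓ)}` lies in the convex hull of
`{z_1, …, z_N}`. -/
theorem paddle_iterates_bounded (Q N K d : ℕ) (hQ : 1 ≤ Q) (hN : Q ≤ N) (hK : 1 ≤ K)
    (lam ε : ℝ) (hlam : 0 < lam) (hε : 0 < ε)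
    (z : Fin N → EuclideanSpace ℝ (Fin d)) (y : Fin N → Fin K → ℝ)
    (hy01 : ∀ n : Fin N, Q ≤ (n : ℕ) → ∀ k, y n k = 0 ∨ y n k = 1)
    (hysum : ∀ n : Fin N, Q ≤ (n : ℕ) → ∑ k, y n k = 1)
    (hcover : ∀ k, ∃ n : Fin N, Q ≤ (n : ℕ) ∧ y n k = 1)
    (U : ℕ → Fin N → Fin K → ℝ) (W : ℕ → Fin K → EuclideanSpace ℝ (Fin d))
    (V : ℕ → Fin K → ℝ)
    (hV0 : V 0 = 0)
    (hU : ∀ ℓ, 1 ≤ ℓ → ∀ n : Fin N,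
      ((n : ℕ) < Q → ∀ k, U ℓ n k =
        Real.exp (-(1 / 2) * ‖W (ℓ - 1) k - z n‖ ^ 2 + (lam / Q) * V (ℓ - 1) k) /
          ∑ j, Real.exp (-(1 / 2) * ‖W (ℓ - 1) j - z n‖ ^ 2 + (lam / Q) * V (ℓ - 1) j)) ∧
      (Q ≤ (n : ℕ) → U ℓ n = y n))
    (hVit : ∀ ℓ, 1 ≤ ℓ → ∀ k, V ℓ k = 1 + Real.log
        ((1 / Q : ℝ) * (∑ n ∈ Finset.univ.filter (fun n : Fin N => (n : ℕ) < Q), U ℓ n k) + ε))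
    (hW : ∀ ℓ, 1 ≤ ℓ → ∀ k, W ℓ k = (∑ n, U ℓ n k)⁻¹ • ∑ n, U ℓ n k • z n) :
    ∀ ℓ, 1 ≤ ℓ →
      (∀ k, 0 < ∑ n, U ℓ n k) ∧
      (∀ n, (∀ k, 0 ≤ U ℓ n k) ∧ ∑ k, U ℓ n k = 1) ∧
      (∀ k, V ℓ k ∈ Set.Icc (1 + Real.log ε) (1 + Real.log (1 + ε))) ∧
      (∀ k, W ℓ k ∈ convexHull ℝ (Set.range z)) := by
  intro ℓ hℓ
  have : Nonempty (Fin K) := ⟨⟨0, hK⟩⟩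
  have hsimplex : ∀ n, (∀ k, 0 ≤ U ℓ n k) ∧ ∑ k, U ℓ n k = 1 := by
    intro n
    rcases lt_or_ge (n : ℕ) Q with hn | hn
    · simp only [(hU ℓ hℓ n).1 hn]
      exact softmax_mem_simplex _
    · rw [(hU ℓ hℓ n).2 hn]
      refine ⟨fun k => ?_, hysum n hn⟩
      rcases hy01 n hn k with h | h <;> simp [h]
  have hnonneg : ∀ n k, 0 ≤ U ℓ n k := fun n => (hsimplex n).1
  have hle : ∀ n k, U ℓ n k ≤ 1 := fun n k =>
    (hsimplex n).2 ▸ Finset.single_le_sum (fun j _ => hnonneg n j) (Finset.mem_univ k)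
  have hpos : ∀ k, 0 < ∑ n, U ℓ n k := by
    intro k
    obtain ⟨n, hn, hnk⟩ := hcover k
    refine Finset.sum_pos' (fun m _ => hnonneg m k) ⟨n, Finset.mem_univ n, ?_⟩
    rw [(hU ℓ hℓ n).2 hn, hnk]
    exact one_pos
  refine ⟨hpos, hsimplex, fun k => ?_, fun k => ?_⟩
  · have hQ' : (0 : ℝ) < Q := by exact_mod_cast hQ
    set S := ∑ n ∈ Finset.univ.filter (fun n : Fin N => (n : ℕ) < Q), U ℓ n k with hS
    have hS0 : 0 ≤ S := Finset.sum_nonneg fun n _ => hnonneg n k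
    have hSQ : S ≤ Q := by
      refine (Finset.sum_le_card_nsmul _ _ 1 fun n _ => hle n k).trans ?_
      simpa using card_filter_fin_val_lt_le N Q
    have hmean0 : 0 ≤ (1 / Q : ℝ) * S := by positivity
    have hmean1 : (1 / Q : ℝ) * S ≤ 1 := by
      rw [one_div_mul_eq_div]
      exact div_le_one_of_le₀ hSQ hQ'.le
    rw [hVit ℓ hℓ k, ← hS]
    constructor <;> gcongr <;> linarith
  · rw [hW ℓ hℓ k]
    exact Finset.univ.centerMass_mem_convexHull (fun n _ => hnonneg n k) (hpos k)
      fun n _ => Set.mem_range_self n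
end
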